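/- Under the system model, for every l ∈ {1,…,L} and k ∈ {1,…,K}, the cross-covariance between the effective channel at time t and the stacked received pilot signal satisfies E[h_{jlk}(t) ψ_jᴴ] = λ_{jlk} (x̃_{lk}ᴴ D_{δ(t)}) ⊗ I_N; equivalently, for every pilot time b ∈ {1,…,B}, E[h_{jlk}(t) y_j(b)ᴴ] = λ_{jlk} x_{lk}(b)* e^{−δ(t−b)/2} · I_N. -/

import Mathlib

open MeasureTheory ProbabilityTheory Matrix Complex
open scoped ProbabilityTheory Kronecker

/-- Deterministic phase-drift damping matrix
`D_{δ(t)} = diag(e^{−δ(t−1)/2}, …, e^{−δ(t−B)/2})`; the `b`-th diagonal entry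
(`b : Fin B`, corresponding to pilot time `b+1`) is `e^{−δ(t−(b+1))/2}`. -/
noncomputable def Dmat (δ : ℝ) (t B : ℕ) : Matrix (Fin B) (Fin B) ℂ :=
  Matrix.diagonal fun b => (Real.exp (-(δ / 2) * ((t : ℝ) - ((b : ℕ) + 1))) : ℂ)

/-- Deterministic pilot matrix `X_{ℓm}` built from the pilot sequence `xv`:
diagonal entries `|x(b)|²(1+κ²)` and off-diagonal entries `x(b₁)x(b₂)* e^{−δ|b₁−b₂|/2}`. -/
noncomputable def Xmat {B : ℕ} (κ δ : ℝ) (xv : Fin B → ℂ) : Matrix (Fin B) (Fin B) ℂ :=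
  Matrix.of fun b₁ b₂ =>
    if b₁ = b₂ then ((Complex.normSq (xv b₁) * (1 + κ ^ 2) : ℝ) : ℂ)
    else xv b₁ * star (xv b₂) * (Real.exp (-(δ / 2) * |((b₁ : ℕ) : ℝ) - ((b₂ : ℕ) : ℝ)|) : ℂ)

/-- Deterministic matrix `Ψ_j = Σ_ℓ Σ_m λ_{jℓm} X_{ℓm} + σ²ξ I_B`. -/
noncomputable def PsiMat {B L K : ℕ} (lam : Fin L → Fin K → ℝ) (σ2 ξ κ δ : ℝ)
    (x : Fin L → Fin K → Fin B → ℂ) : Matrix (Fin B) (Fin B) ℂ :=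
  (∑ l, ∑ m, ((lam l m : ℝ) : ℂ) • Xmat κ δ (x l m)) + ((σ2 * ξ : ℝ) : ℂ) • 1

/-- The uplink massive MIMO system model at base station `j`, on the probability space `Ω`,
with `N` antennas, pilot length `B`, `L` cells, `K` users per cell, channel attenuations
`lam l k = λ_{jlk}`, noise variance `σ2 = σ²`, noise amplification `ξ`, distortion parameter
`κ`, phase-drift variance `δ`, and deterministic pilot sequences `x l k : Fin B → ℂ`
(pilot time `b+1` for `b : Fin B`).  All underlying real random sources are mutually
independent: channel real/imaginary parts `hRe, hIm ~ N(0, λ_{jlk}/2)` (so the channel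
coefficients are `CN(0, λ_{jlk})`), phase-drift increments `dphi n u ~ N(0, δ)` (`u ≥ 1`),
distortion real/imaginary parts `zRe, zIm ~ N(0, 1/2)` (so `z ~ CN(0,1)`), and receiver-noise
real/imaginary parts `etaRe, etaIm ~ N(0, σ²ξ/2)` (so `η ~ CN(0, σ²ξ)`). -/
structure MIMOModel (Ω : Type*) [MeasureSpace Ω] (N B L K : ℕ)
    (lam : Fin L → Fin K → ℝ) (σ2 ξ κ δ : ℝ) (x : Fin L → Fin K → Fin B → ℂ) where
  hRe : Fin L → Fin K → Fin N → Ω → ℝ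
  hIm : Fin L → Fin K → Fin N → Ω → ℝ
  dphi : Fin N → ℕ → Ω → ℝ
  zRe : Fin N → ℕ → Ω → ℝ
  zIm : Fin N → ℕ → Ω → ℝ
  etaRe : Fin N → ℕ → Ω → ℝ
  etaIm : Fin N → ℕ → Ω → ℝ
  meas_hRe : ∀ l k n, Measurable (hRe l k n)
  meas_hIm : ∀ l k n, Measurable (hIm l k n)
  meas_dphi : ∀ n u, Measurable (dphi n u)
  meas_zRe : ∀ n s, Measurable (zRe n s)
  meas_zIm : ∀ n s, Measurable (zIm n s)
  meas_etaRe : ∀ n s, Measurable (etaRe n s)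
  meas_etaIm : ∀ n s, Measurable (etaIm n s)
  law_hRe : ∀ l k n, Measure.map (hRe l k n) ℙ = gaussianReal 0 (Real.toNNReal (lam l k / 2))
  law_hIm : ∀ l k n, Measure.map (hIm l k n) ℙ = gaussianReal 0 (Real.toNNReal (lam l k / 2))
  law_dphi : ∀ n u, Measure.map (dphi n u) ℙ = gaussianReal 0 (Real.toNNReal δ)
  law_zRe : ∀ n s, Measure.map (zRe n s) ℙ = gaussianReal 0 (Real.toNNReal (1 / 2))
  law_zIm : ∀ n s, Measure.map (zIm n s) ℙ = gaussianReal 0 (Real.toNNReal (1 / 2))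
  law_etaRe : ∀ n s, Measure.map (etaRe n s) ℙ = gaussianReal 0 (Real.toNNReal (σ2 * ξ / 2))
  law_etaIm : ∀ n s, Measure.map (etaIm n s) ℙ = gaussianReal 0 (Real.toNNReal (σ2 * ξ / 2))
  indep : iIndepFun (m := fun _ => (inferInstance : MeasurableSpace ℝ))
    (fun i : (Fin L × Fin K × Fin N × Bool) ⊕ (Fin N × ℕ) ⊕ (Fin N × ℕ × Bool) ⊕
        (Fin N × ℕ × Bool) =>
      match i with
      | Sum.inl (l, k, n, false) => hRe l k n
      | Sum.inl (l, k, n, true) => hIm l k n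
      | Sum.inr (Sum.inl (n, u)) => dphi n u
      | Sum.inr (Sum.inr (Sum.inl (n, s, false))) => zRe n s
      | Sum.inr (Sum.inr (Sum.inl (n, s, true))) => zIm n s
      | Sum.inr (Sum.inr (Sum.inr (n, s, false))) => etaRe n s
      | Sum.inr (Sum.inr (Sum.inr (n, s, true))) => etaIm n s) (ℙ : Measure Ω)

namespace MIMOModel

variable {Ω : Type*} [MeasureSpace Ω] {N B L K : ℕ} {lam : Fin L → Fin K → ℝ}
  {σ2 ξ κ δ : ℝ} {x : Fin L → Fin K → Fin B → ℂ}

variable (M : MIMOModel Ω N B L K lam σ2 ξ κ δ x)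

/-- Accumulated phase drift `φ_{jn}(s) = Σ_{u=1}^{s} Δ_{jn}(u)`. -/
noncomputable def phase (n : Fin N) (s : ℕ) (ω : Ω) : ℝ :=
  ∑ u ∈ Finset.Icc 1 s, M.dphi n u ω

/-- Channel coefficient `h_{jlk}^{(n)} ~ CN(0, λ_{jlk})`. -/
noncomputable def ch (l : Fin L) (k : Fin K) (n : Fin N) (ω : Ω) : ℂ :=
  Complex.mk (M.hRe l k n ω) (M.hIm l k n ω)

/-- Distortion variable `z_{jn}(s) ~ CN(0,1)`. -/
noncomputable def z (n : Fin N) (s : ℕ) (ω : Ω) : ℂ :=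
  Complex.mk (M.zRe n s ω) (M.zIm n s ω)

/-- Receiver noise `η_j^{(n)}(s) ~ CN(0, σ²ξ)`. -/
noncomputable def eta (n : Fin N) (s : ℕ) (ω : Ω) : ℂ :=
  Complex.mk (M.etaRe n s ω) (M.etaIm n s ω)

/-- Received pilot signal at antenna `n`, pilot time `b+1` (for `b : Fin B`):
`y_j^{(n)}(b) = e^{iφ_{jn}(b)} Σ_l Σ_m h_{jlm}^{(n)} x_{lm}(b)
  + κ (Σ_l Σ_m |x_{lm}(b)|² |h_{jlm}^{(n)}|²)^{1/2} z_{jn}(b) + η_j^{(n)}(b)`. -/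
noncomputable def y (n : Fin N) (b : Fin B) (ω : Ω) : ℂ :=
  Complex.exp (Complex.I * ((M.phase n ((b : ℕ) + 1) ω : ℝ) : ℂ))
      * ∑ l, ∑ m, M.ch l m n ω * x l m b
    + (κ : ℂ) * ((Real.sqrt (∑ l, ∑ m, Complex.normSq (x l m b)
        * Complex.normSq (M.ch l m n ω)) : ℝ) : ℂ) * M.z n ((b : ℕ) + 1) ω
    + M.eta n ((b : ℕ) + 1) ω

/-- Effective channel at time `t`: `h_{jlk}(t)` has `n`-th entry `e^{iφ_{jn}(t)} h_{jlk}^{(n)}`. -/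
noncomputable def hEff (l : Fin L) (k : Fin K) (t : ℕ) (n : Fin N) (ω : Ω) : ℂ :=
  Complex.exp (Complex.I * ((M.phase n t ω : ℝ) : ℂ)) * M.ch l k n ω

/-- LMMSE channel estimate `ĥ_{jlk}(t) = λ_{jlk} Σ_b c_b y_j(b)` with
`(c_1, …, c_B) = x̃_{lk}ᴴ D_{δ(t)} Ψ_j⁻¹`. -/
noncomputable def hHat (l : Fin L) (k : Fin K) (t : ℕ) (n : Fin N) (ω : Ω) : ℂ :=
  ((lam l k : ℝ) : ℂ) * ∑ b,
    Matrix.vecMul (star (x l k)) (Dmat δ t B * (PsiMat lam σ2 ξ κ δ x)⁻¹) b * M.y n b ω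

/-- Data-phase distortion noise `υ_j(t)` with `n`-th entry
`κ (Σ_l Σ_m p_{lm} |h_{jlm}^{(n)}|²)^{1/2} z_{jn}(t)`. -/
noncomputable def ups (p : Fin L → Fin K → ℝ) (t : ℕ) (n : Fin N) (ω : Ω) : ℂ :=
  (κ : ℂ) * ((Real.sqrt (∑ l, ∑ m, p l m * Complex.normSq (M.ch l m n ω)) : ℝ) : ℂ)
    * M.z n t ω

/-- The uplink SINR of user `k` in cell `j` at time `t` with the MRC filter
`v_{jk}(t) = ĥ_{jjk}(t)`. -/
noncomputable def SINR (p : Fin L → Fin K → ℝ) (j : Fin L) (k : Fin K) (t : ℕ) : ℝ :=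
  p j k * Complex.normSq (∫ ω, ∑ n, star (M.hHat j k t n ω) * M.hEff j k t n ω) /
    ((∑ l, ∑ m, p l m * ∫ ω, Complex.normSq (∑ n, star (M.hHat j k t n ω) * M.hEff l m t n ω))
      - p j k * Complex.normSq (∫ ω, ∑ n, star (M.hHat j k t n ω) * M.hEff j k t n ω)
      + (∫ ω, Complex.normSq (∑ n, star (M.hHat j k t n ω) * M.ups p t n ω))
      + σ2 * ξ * ∫ ω, ∑ n, Complex.normSq (M.hHat j k t n ω))

end MIMOModel

section helpers

/-- Index set of all real random sources. -/
abbrev SrcIdx (N L K : ℕ) : Type :=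
  (Fin L × Fin K × Fin N × Bool) ⊕ (Fin N × ℕ) ⊕ (Fin N × ℕ × Bool) ⊕ (Fin N × ℕ × Bool)

lemma aux_mk_measurable {α : Type*} [MeasurableSpace α] {a b : α → ℝ} (ha : Measurable a)
    (hb : Measurable b) : Measurable (fun w => Complex.mk (a w) (b w)) := by
  have : (fun w => Complex.mk (a w) (b w)) = fun w => ((a w : ℝ) : ℂ) + ((b w : ℝ) : ℂ) * I := by
    funext w
    exact Complex.mk_eq_add_mul_I _ _
  rw [this]
  fun_prop

lemma aux_exp_sum_measurable {α : Type*} [MeasurableSpace α] {a : ℕ → α → ℝ} (s : Finset ℕ)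
    (ha : ∀ u ∈ s, Measurable (a u)) :
    Measurable (fun w => Complex.exp (Complex.I * ((∑ u ∈ s, a u w : ℝ) : ℂ))) := by
  have h : Measurable (fun w => ∑ u ∈ s, a u w) := Finset.measurable_fun_sum s ha
  fun_prop

lemma aux_sqrt_measurable {α : Type*} [MeasurableSpace α] {L K : ℕ} {c : Fin L → Fin K → ℝ}
    {h : Fin L → Fin K → α → ℂ} (hh : ∀ l k, Measurable (h l k)) :
    Measurable (fun w => ((Real.sqrt (∑ l, ∑ m, c l m * Complex.normSq (h l m w)) : ℝ) : ℂ)) := by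
  have h1 : ∀ l m, Measurable (fun w => Complex.normSq (h l m w)) := fun l m =>
    Complex.continuous_normSq.measurable.comp (hh l m)
  fun_prop

lemma aux_indep {Ω : Type*} {m0 : MeasurableSpace Ω} {μ : Measure Ω} {m₁ m₂ : MeasurableSpace Ω}
    (hi : Indep m₁ m₂ μ) {X Y : Ω → ℂ} (hX : Measurable[m₁] X) (hY : Measurable[m₂] Y) :
    IndepFun X Y μ := by
  rw [IndepFun_iff_Indep]
  exact indep_of_indep_of_le_left (indep_of_indep_of_le_right hi hY.comap_le) hX.comap_le

lemma aux_gauss_memLp {Ω : Type*} {m0 : MeasurableSpace Ω} {μ : Measure Ω} {X : Ω → ℝ}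
    (hX : Measurable X) {v : NNReal} (h : Measure.map X μ = gaussianReal 0 v) : MemLp X 2 μ := by
  have h2 := memLp_id_gaussianReal' (μ := 0) (v := v) 2 (by simp)
  rw [← h] at h2
  exact (memLp_map_measure_iff aestronglyMeasurable_id hX.aemeasurable).1 h2

lemma aux_gauss_mean {Ω : Type*} {m0 : MeasurableSpace Ω} {μ : Measure Ω} {X : Ω → ℝ}
    (hX : Measurable X) {v : NNReal} (h : Measure.map X μ = gaussianReal 0 v) :
    ∫ ω, X ω ∂μ = 0 := by
  have h2 := integral_id_gaussianReal (μ := 0) (v := v)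
  rw [← h] at h2
  rwa [integral_map hX.aemeasurable (by fun_prop)] at h2

lemma aux_gauss_sq {Ω : Type*} {m0 : MeasurableSpace Ω} {μ : Measure Ω} {X : Ω → ℝ}
    (hX : Measurable X) {v : NNReal} (h : Measure.map X μ = gaussianReal 0 v) :
    ∫ ω, X ω ^ 2 ∂μ = v := by
  have h2 := variance_fun_id_gaussianReal (μ := 0) (v := v)
  rw [variance_eq_integral measurable_id'.aemeasurable, integral_id_gaussianReal, ← h,
    integral_map hX.aemeasurable (by fun_prop)] at h2
  simpa using h2

lemma aux_gauss_char {Ω : Type*} {m0 : MeasurableSpace Ω} {μ : Measure Ω} {X : Ω → ℝ}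
    (hX : Measurable X) {v : NNReal} (h : Measure.map X μ = gaussianReal 0 v) :
    ∫ ω, Complex.exp (Complex.I * ((X ω : ℝ) : ℂ)) ∂μ = Complex.exp (-(v : ℂ) / 2) := by
  have h2 := charFun_gaussianReal (μ := 0) (v := v) 1
  rw [← h, charFun_apply_real, integral_map hX.aemeasurable (by fun_prop)] at h2
  convert h2 using 1
  · congr 1
    funext ω
    congr 1
    push_cast
    ring
  · congr 1
    push_cast
    ring

lemma aux_ofReal_memLp {Ω : Type*} {m0 : MeasurableSpace Ω} {μ : Measure Ω} {X : Ω → ℝ}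
    (hX : MemLp X 2 μ) : MemLp (fun ω => ((X ω : ℝ) : ℂ)) 2 μ :=
  Complex.ofRealCLM.comp_memLp' hX

lemma aux_mk_memLp {Ω : Type*} {m0 : MeasurableSpace Ω} {μ : Measure Ω} {X Y : Ω → ℝ}
    (hX : MemLp X 2 μ) (hY : MemLp Y 2 μ) : MemLp (fun ω => Complex.mk (X ω) (Y ω)) 2 μ := by
  have : (fun w => Complex.mk (X w) (Y w)) = fun w => ((X w : ℝ) : ℂ) + ((Y w : ℝ) : ℂ) * I := by
    funext w
    exact Complex.mk_eq_add_mul_I _ _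
  rw [this]
  exact (aux_ofReal_memLp hX).add ((aux_ofReal_memLp hY).mul_const I)

lemma aux_mk_mean {Ω : Type*} {m0 : MeasurableSpace Ω} {μ : Measure Ω} [IsFiniteMeasure μ]
    {X Y : Ω → ℝ} (hX : MemLp X 2 μ) (hY : MemLp Y 2 μ) (hX0 : ∫ ω, X ω ∂μ = 0)
    (hY0 : ∫ ω, Y ω ∂μ = 0) : ∫ ω, Complex.mk (X ω) (Y ω) ∂μ = 0 := by
  have : (fun w => Complex.mk (X w) (Y w)) = fun w => ((X w : ℝ) : ℂ) + ((Y w : ℝ) : ℂ) * I := by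
    funext w
    exact Complex.mk_eq_add_mul_I _ _
  rw [this, integral_add ((aux_ofReal_memLp hX).integrable (by norm_num))
    (((aux_ofReal_memLp hY).integrable (by norm_num)).mul_const I), integral_mul_const,
    integral_complex_ofReal, integral_complex_ofReal]
  simp [hX0, hY0]

lemma aux_star_mean {Ω : Type*} {m0 : MeasurableSpace Ω} {μ : Measure Ω} {X : Ω → ℂ}
    (h : ∫ ω, X ω ∂μ = 0) : ∫ ω, star (X ω) ∂μ = 0 := by
  have := integral_conj (μ := μ) (f := X) (𝕜 := ℂ)
  rw [h] at this
  simpa using this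

lemma aux_star_memLp {Ω : Type*} {m0 : MeasurableSpace Ω} {μ : Measure Ω} {X : Ω → ℂ}
    (h : MemLp X 2 μ) : MemLp (fun ω => star (X ω)) 2 μ := h.star

namespace MIMOModel

variable {Ω : Type*} [MeasureSpace Ω] {N B L K : ℕ} {lam : Fin L → Fin K → ℝ}
  {σ2 ξ κ δ : ℝ} {x : Fin L → Fin K → Fin B → ℂ}

variable (M : MIMOModel Ω N B L K lam σ2 ξ κ δ x)

/-- All real sources as one family. -/
def src (i : SrcIdx N L K) : Ω → ℝ :=
  match i with
  | Sum.inl (l, k, n, false) => M.hRe l k n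
  | Sum.inl (l, k, n, true) => M.hIm l k n
  | Sum.inr (Sum.inl (n, u)) => M.dphi n u
  | Sum.inr (Sum.inr (Sum.inl (n, s, false))) => M.zRe n s
  | Sum.inr (Sum.inr (Sum.inl (n, s, true))) => M.zIm n s
  | Sum.inr (Sum.inr (Sum.inr (n, s, false))) => M.etaRe n s
  | Sum.inr (Sum.inr (Sum.inr (n, s, true))) => M.etaIm n s

/-- Sigma-algebra generated by the sources with index in `S`. -/
def sig (S : Set (SrcIdx N L K)) : MeasurableSpace Ω :=
  ⨆ i ∈ S, MeasurableSpace.comap (M.src i) (inferInstance : MeasurableSpace ℝ)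

lemma src_measurable (i : SrcIdx N L K) : Measurable (M.src i) := by
  rcases i with ⟨l, k, n, _ | _⟩ | ⟨n, u⟩ | ⟨n, s, _ | _⟩ | ⟨n, s, _ | _⟩
  · exact M.meas_hRe l k n
  · exact M.meas_hIm l k n
  · exact M.meas_dphi n u
  · exact M.meas_zRe n s
  · exact M.meas_zIm n s
  · exact M.meas_etaRe n s
  · exact M.meas_etaIm n s

lemma src_iIndep : iIndepFun M.src (ℙ : Measure Ω) := M.indep

lemma sig_indep {S T : Set (SrcIdx N L K)} (h : Disjoint S T) :
    Indep (M.sig S) (M.sig T) (ℙ : Measure Ω) :=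
  indep_iSup_of_disjoint (fun i => (M.src_measurable i).comap_le) M.src_iIndep h

lemma src_sig {S : Set (SrcIdx N L K)} {i : SrcIdx N L K} (h : i ∈ S) :
    Measurable[M.sig S] (M.src i) :=
  (comap_measurable (M.src i)).mono
    (le_iSup₂ (f := fun j (_ : j ∈ S) =>
      MeasurableSpace.comap (M.src j) (inferInstance : MeasurableSpace ℝ)) i h) le_rfl

lemma sig_le (S : Set (SrcIdx N L K)) : M.sig S ≤ (inferInstance : MeasurableSpace Ω) :=
  iSup₂_le fun i _ => (M.src_measurable i).comap_le

lemma ch_sig {S : Set (SrcIdx N L K)} {l k n} (h : ∀ c, Sum.inl (l, k, n, c) ∈ S) :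
    Measurable[M.sig S] (M.ch l k n) :=
  @aux_mk_measurable Ω (M.sig S) _ _ (M.src_sig (h false)) (M.src_sig (h true))

lemma z_sig {S : Set (SrcIdx N L K)} {n s} (h : ∀ c, Sum.inr (Sum.inr (Sum.inl (n, s, c))) ∈ S) :
    Measurable[M.sig S] (M.z n s) :=
  @aux_mk_measurable Ω (M.sig S) _ _ (M.src_sig (h false)) (M.src_sig (h true))

lemma eta_sig {S : Set (SrcIdx N L K)} {n s} (h : ∀ c, Sum.inr (Sum.inr (Sum.inr (n, s, c))) ∈ S) :
    Measurable[M.sig S] (M.eta n s) :=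
  @aux_mk_measurable Ω (M.sig S) _ _ (M.src_sig (h false)) (M.src_sig (h true))

lemma expPhase_sig {S : Set (SrcIdx N L K)} {n} (s : Finset ℕ)
    (h : ∀ u ∈ s, Sum.inr (Sum.inl (n, u)) ∈ S) :
    Measurable[M.sig S] (fun ω => Complex.exp (Complex.I * ((∑ u ∈ s, M.dphi n u ω : ℝ) : ℂ))) :=
  @aux_exp_sum_measurable Ω (M.sig S) _ s (fun u hu => M.src_sig (h u hu))

variable [IsProbabilityMeasure (ℙ : Measure Ω)]

lemma ch_memLp (l k n) : MemLp (M.ch l k n) 2 (ℙ : Measure Ω) :=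
  aux_mk_memLp (aux_gauss_memLp (M.meas_hRe l k n) (M.law_hRe l k n))
    (aux_gauss_memLp (M.meas_hIm l k n) (M.law_hIm l k n))

lemma ch_mean (l k n) : ∫ ω, M.ch l k n ω = 0 :=
  aux_mk_mean (aux_gauss_memLp (M.meas_hRe l k n) (M.law_hRe l k n))
    (aux_gauss_memLp (M.meas_hIm l k n) (M.law_hIm l k n))
    (aux_gauss_mean (M.meas_hRe l k n) (M.law_hRe l k n))
    (aux_gauss_mean (M.meas_hIm l k n) (M.law_hIm l k n))

lemma z_memLp (n s) : MemLp (M.z n s) 2 (ℙ : Measure Ω) :=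
  aux_mk_memLp (aux_gauss_memLp (M.meas_zRe n s) (M.law_zRe n s))
    (aux_gauss_memLp (M.meas_zIm n s) (M.law_zIm n s))

lemma z_mean (n s) : ∫ ω, M.z n s ω = 0 :=
  aux_mk_mean (aux_gauss_memLp (M.meas_zRe n s) (M.law_zRe n s))
    (aux_gauss_memLp (M.meas_zIm n s) (M.law_zIm n s))
    (aux_gauss_mean (M.meas_zRe n s) (M.law_zRe n s))
    (aux_gauss_mean (M.meas_zIm n s) (M.law_zIm n s))

lemma eta_memLp (n s) : MemLp (M.eta n s) 2 (ℙ : Measure Ω) :=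
  aux_mk_memLp (aux_gauss_memLp (M.meas_etaRe n s) (M.law_etaRe n s))
    (aux_gauss_memLp (M.meas_etaIm n s) (M.law_etaIm n s))

lemma eta_mean (n s) : ∫ ω, M.eta n s ω = 0 :=
  aux_mk_mean (aux_gauss_memLp (M.meas_etaRe n s) (M.law_etaRe n s))
    (aux_gauss_memLp (M.meas_etaIm n s) (M.law_etaIm n s))
    (aux_gauss_mean (M.meas_etaRe n s) (M.law_etaRe n s))
    (aux_gauss_mean (M.meas_etaIm n s) (M.law_etaIm n s))

/-- Channel second moments. -/
lemma ch_cov (hlam : ∀ l k, 0 < lam l k) (l k n l' k' n') :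
    ∫ ω, M.ch l k n ω * star (M.ch l' k' n' ω)
      = if (l, k, n) = (l', k', n') then ((lam l k : ℝ) : ℂ) else 0 := by
  split_ifs with h
  · simp only [Prod.mk.injEq] at h
    obtain ⟨rfl, rfl, rfl⟩ := h
    have h1 : ∀ ω, M.ch l k n ω * star (M.ch l k n ω)
        = (((M.hRe l k n ω) ^ 2 + (M.hIm l k n ω) ^ 2 : ℝ) : ℂ) := by
      intro ω
      have := Complex.mul_conj (M.ch l k n ω)
      rw [Complex.star_def, this, Complex.normSq_apply]
      simp [ch, sq]
    simp_rw [h1]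
    rw [integral_complex_ofReal, integral_add (aux_gauss_memLp (M.meas_hRe l k n) (M.law_hRe l k n)).integrable_sq
      (aux_gauss_memLp (M.meas_hIm l k n) (M.law_hIm l k n)).integrable_sq,
      aux_gauss_sq (M.meas_hRe l k n) (M.law_hRe l k n),
      aux_gauss_sq (M.meas_hIm l k n) (M.law_hIm l k n),
      Real.coe_toNNReal _ (by linarith [hlam l k])]
    simp
  · have hi : IndepFun (M.ch l k n) (fun ω => star (M.ch l' k' n' ω)) (ℙ : Measure Ω) := by
      refine aux_indep (M.sig_indep (S := {i | ∃ c, i = Sum.inl (l, k, n, c)})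
        (T := {i | ∃ c, i = Sum.inl (l', k', n', c)}) ?_) (M.ch_sig fun c => ⟨c, rfl⟩)
        (continuous_star.measurable.comp (M.ch_sig fun c => ⟨c, rfl⟩))
      rw [Set.disjoint_left]
      rintro _ ⟨c, rfl⟩ ⟨c', hc⟩
      simp only [Sum.inl.injEq, Prod.mk.injEq] at hc
      exact h (by simp [hc.1, hc.2.1, hc.2.2.1])
    rw [hi.integral_fun_mul_eq_mul_integral (M.ch_memLp l k n).1
      (aux_star_memLp (M.ch_memLp l' k' n')).1, M.ch_mean, zero_mul]

/-- Characteristic function of the phase increment. -/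
lemma phase_inc (hδ : 0 ≤ δ) (n : Fin N) (s d : ℕ) :
    ∫ ω, Complex.exp (Complex.I * ((∑ u ∈ Finset.Ioc s (s + d), M.dphi n u ω : ℝ) : ℂ))
      = ((Real.exp (-(δ / 2) * d) : ℝ) : ℂ) := by
  induction d with
  | zero => simp
  | succ d ih =>
    have h1 : ∀ ω, Complex.exp (Complex.I *
          ((∑ u ∈ Finset.Ioc s (s + (d + 1)), M.dphi n u ω : ℝ) : ℂ))
        = Complex.exp (Complex.I * ((∑ u ∈ Finset.Ioc s (s + d), M.dphi n u ω : ℝ) : ℂ))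
          * Complex.exp (Complex.I * ((∑ u ∈ {s + d + 1}, M.dphi n u ω : ℝ) : ℂ)) := by
      intro ω
      rw [← Complex.exp_add, ← mul_add, ← Complex.ofReal_add, ← add_assoc,
        Finset.sum_Ioc_succ_top (by omega)]
      simp
    have hX := M.expPhase_sig (n := n)
      (S := {i | ∃ u ≤ s + d, i = Sum.inr (Sum.inl (n, u))}) (Finset.Ioc s (s + d))
      (fun u hu => ⟨u, (Finset.mem_Ioc.1 hu).2, rfl⟩)
    have hY := M.expPhase_sig (n := n)
      (S := {Sum.inr (Sum.inl (n, s + d + 1))}) {s + d + 1}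
      (fun u hu => by simp at hu; simp [hu])
    have hi := aux_indep (M.sig_indep (by
      rw [Set.disjoint_left]
      rintro _ ⟨u, hu, rfl⟩ hc
      simp at hc
      omega)) hX hY
    simp_rw [h1]
    rw [hi.integral_fun_mul_eq_mul_integral (hX.mono (M.sig_le _) le_rfl).aestronglyMeasurable
      (hY.mono (M.sig_le _) le_rfl).aestronglyMeasurable, ih]
    simp only [Finset.sum_singleton]
    rw [aux_gauss_char (M.meas_dphi n _) (M.law_dphi n _), Real.coe_toNNReal _ hδ]
    rw [Complex.ofReal_exp, Complex.ofReal_exp, ← Complex.exp_add]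
    congr 1
    push_cast
    ring

/-- The set of channel and phase indices. -/
def Shd : Set (SrcIdx N L K) :=
  {i | (∃ a, i = Sum.inl a) ∨ ∃ a, i = Sum.inr (Sum.inl a)}


lemma hEff_sig (l k t n) : Measurable[M.sig Shd] (M.hEff l k t n) := by
  have h1 := M.expPhase_sig (S := Shd) (n := n) (Finset.Icc 1 t) (fun _ _ => Or.inr ⟨_, rfl⟩)
  have h2 := M.ch_sig (S := Shd) (l := l) (k := k) (n := n) (fun _ => Or.inl ⟨_, rfl⟩)
  exact h1.mul h2

lemma norm_expPhase (n s ω) : ‖Complex.exp (Complex.I * ((M.phase n s ω : ℝ) : ℂ))‖ = 1 := by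
  rw [mul_comm]
  exact Complex.norm_exp_ofReal_mul_I _

lemma hEff_memLp (l k t n) : MemLp (M.hEff l k t n) 2 (ℙ : Measure Ω) := by
  refine (M.ch_memLp l k n).of_le
    ((M.hEff_sig l k t n).mono (M.sig_le _) le_rfl).aestronglyMeasurable ?_
  refine Filter.Eventually.of_forall fun ω => ?_
  rw [hEff, norm_mul, norm_expPhase, one_mul]

/-- The distortion standard deviation (without `κ`). -/
noncomputable def sd (n : Fin N) (b : Fin B) (ω : Ω) : ℂ :=
  ((Real.sqrt (∑ l, ∑ m, Complex.normSq (x l m b) * Complex.normSq (M.ch l m n ω)) : ℝ) : ℂ)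

lemma sd_sig (n b) : Measurable[M.sig Shd] (M.sd n b) :=
  @aux_sqrt_measurable Ω (M.sig Shd) _ _ _ _
    (fun l k => M.ch_sig (S := Shd) (l := l) (k := k) (n := n) (fun _ => Or.inl ⟨_, rfl⟩))

lemma sd_memLp (n b) : MemLp (M.sd n b) 2 (ℙ : Measure Ω) := by
  have hm : AEStronglyMeasurable (M.sd n b) (ℙ : Measure Ω) :=
    ((M.sd_sig n b).mono (M.sig_le _) le_rfl).aestronglyMeasurable
  rw [memLp_two_iff_integrable_sq_norm hm]
  have h1 : ∀ ω, ‖M.sd n b ω‖ ^ 2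
      = ∑ l, ∑ m, Complex.normSq (x l m b) * ‖M.ch l m n ω‖ ^ 2 := by
    intro ω
    rw [sd, Complex.norm_real, Real.norm_eq_abs, sq_abs, Real.sq_sqrt]
    · simp_rw [Complex.normSq_eq_norm_sq]
    · exact Finset.sum_nonneg fun l _ => Finset.sum_nonneg fun m _ =>
        mul_nonneg (Complex.normSq_nonneg _) (Complex.normSq_nonneg _)
  simp_rw [h1]
  refine integrable_finsetSum _ fun l _ => integrable_finsetSum _ fun m _ => ?_
  exact ((memLp_two_iff_integrable_sq_norm (M.ch_memLp l m n).1).1 (M.ch_memLp l m n)).const_mul _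

/-- Product of an integrable channel/phase variable with a centred independent variable. -/
lemma centred_term {S : Set (SrcIdx N L K)} (hS : Disjoint Shd S) {X Y : Ω → ℂ}
    (hX : Measurable[M.sig Shd] X) (hY : Measurable[M.sig S] Y)
    (hXi : Integrable X (ℙ : Measure Ω)) (hYi : MemLp Y 2 (ℙ : Measure Ω)) (hY0 : ∫ ω, Y ω = 0) :
    Integrable (fun ω => X ω * star (Y ω)) (ℙ : Measure Ω) ∧ ∫ ω, X ω * star (Y ω) = 0 := by
  have hi := aux_indep (M.sig_indep hS) hX (continuous_star.measurable.comp hY)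
  have hYs := aux_star_memLp hYi
  refine ⟨hi.integrable_mul hXi (hYs.integrable (by norm_num)), ?_⟩
  have := hi.integral_fun_mul_eq_mul_integral hXi.1 hYs.1
  refine this.trans ?_
  have h0 := aux_star_mean hY0
  simp only [Function.comp_def]
  rw [h0, mul_zero]

/-- Channel term. -/
lemma ch_term (hlam : ∀ l k, 0 < lam l k) (l k l' k' n₁ n₂ t s) :
    Integrable (fun ω => (Complex.exp (Complex.I * ((M.phase n₁ t ω : ℝ) : ℂ))
        * star (Complex.exp (Complex.I * ((M.phase n₂ s ω : ℝ) : ℂ))))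
        * (M.ch l k n₁ ω * star (M.ch l' k' n₂ ω))) (ℙ : Measure Ω) ∧
    ∫ ω, (Complex.exp (Complex.I * ((M.phase n₁ t ω : ℝ) : ℂ))
        * star (Complex.exp (Complex.I * ((M.phase n₂ s ω : ℝ) : ℂ))))
        * (M.ch l k n₁ ω * star (M.ch l' k' n₂ ω))
      = (∫ ω, Complex.exp (Complex.I * ((M.phase n₁ t ω : ℝ) : ℂ))
        * star (Complex.exp (Complex.I * ((M.phase n₂ s ω : ℝ) : ℂ))))
        * if (l, k, n₁) = (l', k', n₂) then ((lam l k : ℝ) : ℂ) else 0 := by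
  have h1 : ∀ n t, Measurable[M.sig {i | ∃ a, i = Sum.inr (Sum.inl a)}]
      (fun ω => Complex.exp (Complex.I * ((M.phase n t ω : ℝ) : ℂ))) := fun n t =>
    M.expPhase_sig (n := n) (Finset.Icc 1 t) (fun _ _ => ⟨_, rfl⟩)
  have h2 : ∀ l k n, Measurable[M.sig {i | ∃ a, i = Sum.inl a}] (M.ch l k n) := fun l k n =>
    M.ch_sig (l := l) (k := k) (n := n) (fun _ => ⟨_, rfl⟩)
  have hP := (h1 n₁ t).mul (continuous_star.measurable.comp (h1 n₂ s))
  have hC := (h2 l k n₁).mul (continuous_star.measurable.comp (h2 l' k' n₂))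
  have hi := aux_indep (M.sig_indep (by
    rw [Set.disjoint_left]
    rintro _ ⟨a, rfl⟩ ⟨c, hc⟩
    simp at hc)) hP hC
  have hPm := (hP.mono (M.sig_le _) le_rfl).aestronglyMeasurable (μ := (ℙ : Measure Ω))
  have hPi := Integrable.of_bound (μ := (ℙ : Measure Ω)) hPm 1 (Filter.Eventually.of_forall fun ω => by
    simp only [Pi.mul_apply, Function.comp_apply, norm_mul, norm_star, norm_expPhase]
    norm_num)
  have hCi := (M.ch_memLp l k n₁).integrable_mul (aux_star_memLp (M.ch_memLp l' k' n₂))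
  refine ⟨hi.integrable_mul hPi hCi, ?_⟩
  rw [← M.ch_cov hlam]
  exact hi.integral_fun_mul_eq_mul_integral hPi.1 hCi.1

lemma phase_term (hδ : 0 ≤ δ) (n : Fin N) {s t : ℕ} (hst : s ≤ t) :
    ∫ ω, Complex.exp (Complex.I * ((M.phase n t ω : ℝ) : ℂ))
        * star (Complex.exp (Complex.I * ((M.phase n s ω : ℝ) : ℂ)))
      = ((Real.exp (-(δ / 2) * ((t : ℝ) - s)) : ℝ) : ℂ) := by
  obtain ⟨d, rfl⟩ := Nat.exists_eq_add_of_le hst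
  have := M.phase_inc hδ n s d
  have e : ((s + d : ℕ) : ℝ) - s = d := by push_cast; ring
  rw [e, ← this]
  congr 1
  funext ω
  rw [Complex.star_def, ← Complex.exp_conj, ← Complex.exp_add, map_mul, Complex.conj_I,
    Complex.conj_ofReal]
  congr 1
  have h2 : M.phase n (s + d) ω = M.phase n s ω + ∑ u ∈ Finset.Ioc s (s + d), M.dphi n u ω := by
    have h3 : ∀ r, Finset.Icc 1 r = Finset.Ioc 0 r := fun r => by
      ext a
      simp only [Finset.mem_Icc, Finset.mem_Ioc]
      omega
    rw [phase, phase, h3, h3]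
    exact (Finset.sum_Ioc_consecutive _ (Nat.zero_le s) hst).symm
  rw [h2]
  push_cast
  ring

lemma entry (hlam : ∀ l k, 0 < lam l k) (hδ : 0 ≤ δ) (t : ℕ) (ht : B ≤ t)
    (l : Fin L) (k : Fin K) (b : Fin B) (n₁ n₂ : Fin N) :
    ∫ ω, M.hEff l k t n₁ ω * star (M.y n₂ b ω)
      = (((lam l k : ℝ) : ℂ) * star (x l k b)
              * ((Real.exp (-(δ / 2) * ((t : ℝ) - ((b : ℕ) + 1))) : ℝ) : ℂ))
            * (1 : Matrix (Fin N) (Fin N) ℂ) n₁ n₂ := by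
  have hdec : ∀ ω, M.hEff l k t n₁ ω * star (M.y n₂ b ω)
      = (∑ l', ∑ m, star (x l' m b) *
          ((Complex.exp (Complex.I * ((M.phase n₁ t ω : ℝ) : ℂ))
          * star (Complex.exp (Complex.I * ((M.phase n₂ ((b : ℕ) + 1) ω : ℝ) : ℂ))))
          * (M.ch l k n₁ ω * star (M.ch l' m n₂ ω))))
        + (κ : ℂ) * ((M.hEff l k t n₁ ω * M.sd n₂ b ω) * star (M.z n₂ ((b : ℕ) + 1) ω))
        + M.hEff l k t n₁ ω * star (M.eta n₂ ((b : ℕ) + 1) ω) := by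
    intro ω
    have hsd : star (M.sd n₂ b ω) = M.sd n₂ b ω := Complex.conj_ofReal _
    have hκ : star (κ : ℂ) = κ := Complex.conj_ofReal _
    have hy : M.y n₂ b ω = Complex.exp (Complex.I * ((M.phase n₂ ((b : ℕ) + 1) ω : ℝ) : ℂ))
        * (∑ l, ∑ m, M.ch l m n₂ ω * x l m b) + (κ : ℂ) * M.sd n₂ b ω * M.z n₂ ((b : ℕ) + 1) ω
        + M.eta n₂ ((b : ℕ) + 1) ω := rfl
    rw [hy, star_add, star_add, star_mul', star_mul', star_mul', hsd, hκ, star_sum, mul_add, mul_add]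
    congr 1
    congr 1
    · rw [Finset.mul_sum, Finset.mul_sum]
      refine Finset.sum_congr rfl fun l' _ => ?_
      rw [star_sum, Finset.mul_sum, Finset.mul_sum]
      refine Finset.sum_congr rfl fun m _ => ?_
      rw [star_mul', hEff]
      ring
    · ring
  have hT := fun l' m => M.ch_term hlam l k l' m n₁ n₂ t ((b : ℕ) + 1)
  have hTi : ∀ l' m, Integrable _ (ℙ : Measure Ω) := fun l' m => (hT l' m).1.const_mul (star (x l' m b))
  have hZ := M.centred_term (S := {i | ∃ a, i = Sum.inr (Sum.inr (Sum.inl a))})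
    (X := M.hEff l k t n₁ * M.sd n₂ b) (Y := M.z n₂ ((b : ℕ) + 1))
    (by
      rw [Set.disjoint_left]
      rintro _ (⟨a, rfl⟩ | ⟨a, rfl⟩) ⟨c, hc⟩ <;> simp at hc)
    ((M.hEff_sig l k t n₁).mul (M.sd_sig n₂ b)) (M.z_sig fun _ => ⟨_, rfl⟩)
    ((M.hEff_memLp l k t n₁).integrable_mul (M.sd_memLp n₂ b)) (M.z_memLp _ _) (M.z_mean _ _)
  have hE := M.centred_term (S := {i | ∃ a, i = Sum.inr (Sum.inr (Sum.inr a))})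
    (X := M.hEff l k t n₁) (Y := M.eta n₂ ((b : ℕ) + 1))
    (by
      rw [Set.disjoint_left]
      rintro _ (⟨a, rfl⟩ | ⟨a, rfl⟩) ⟨c, hc⟩ <;> simp at hc)
    (M.hEff_sig l k t n₁) (M.eta_sig fun _ => ⟨_, rfl⟩)
    ((M.hEff_memLp l k t n₁).integrable (by norm_num)) (M.eta_memLp _ _) (M.eta_mean _ _)
  simp only [Pi.mul_apply] at hZ
  have hSi := integrable_finsetSum Finset.univ fun l' _ =>
    integrable_finsetSum Finset.univ fun m _ => hTi l' m
  simp_rw [hdec]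
  rw [integral_add (hSi.fun_add (hZ.1.const_mul (κ : ℂ))) hE.1, integral_add hSi (hZ.1.const_mul _),
    hE.2, integral_const_mul, hZ.2, mul_zero, add_zero, add_zero,
    integral_finset_sum _ fun l' _ => integrable_finsetSum _ fun m _ => hTi l' m]
  have h3 : ∀ l', ∫ ω, ∑ m, star (x l' m b) *
          ((Complex.exp (Complex.I * ((M.phase n₁ t ω : ℝ) : ℂ))
          * star (Complex.exp (Complex.I * ((M.phase n₂ ((b : ℕ) + 1) ω : ℝ) : ℂ))))
          * (M.ch l k n₁ ω * star (M.ch l' m n₂ ω)))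
        = ∑ m, star (x l' m b) * ((∫ ω, Complex.exp (Complex.I * ((M.phase n₁ t ω : ℝ) : ℂ))
        * star (Complex.exp (Complex.I * ((M.phase n₂ ((b : ℕ) + 1) ω : ℝ) : ℂ))))
        * if (l, k, n₁) = (l', m, n₂) then ((lam l k : ℝ) : ℂ) else 0) := by
    intro l'
    rw [integral_finset_sum _ fun m _ => hTi l' m]
    refine Finset.sum_congr rfl fun m _ => ?_
    rw [integral_const_mul, (hT l' m).2]
  rw [Finset.sum_congr rfl fun l' _ => h3 l']
  by_cases hn : n₁ = n₂
  · subst hn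
    rw [M.phase_term hδ n₁ (by omega : (b : ℕ) + 1 ≤ t), Finset.sum_eq_single l,
      Finset.sum_eq_single k]
    · simp only [if_true, Matrix.one_apply_eq]
      push_cast
      ring
    · intro m _ hm
      rw [if_neg, mul_zero, mul_zero]
      simp [Ne.symm hm]
    · simp
    · intro l' _ hl
      refine Finset.sum_eq_zero fun m _ => ?_
      rw [if_neg, mul_zero, mul_zero]
      simp [Ne.symm hl]
    · simp
  · rw [Matrix.one_apply_ne hn, mul_zero]
    refine Finset.sum_eq_zero fun l' _ => Finset.sum_eq_zero fun m _ => ?_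
    rw [if_neg, mul_zero, mul_zero]
    simp [hn]

end MIMOModel
end helpers

/-- **Cross-covariance between the effective channel and the pilot signal
(Theorem 1, second ingredient).** For all `l, k`,
`E[h_{jlk}(t) ψ_jᴴ] = λ_{jlk} (x̃_{lk}ᴴ D_{δ(t)}) ⊗ I_N`; equivalently, for every pilot
time `b`, `E[h_{jlk}(t) y_j(b)ᴴ] = λ_{jlk} x_{lk}(b)* e^{−δ(t−b)/2} · I_N`. -/
theorem channel_pilot_cross_covariance
    {Ω : Type*} [MeasureSpace Ω] [IsProbabilityMeasure (ℙ : Measure Ω)]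
    {N B L K : ℕ} {lam : Fin L → Fin K → ℝ} {σ2 ξ κ δ : ℝ}
    {x : Fin L → Fin K → Fin B → ℂ}
    (M : MIMOModel Ω N B L K lam σ2 ξ κ δ x)
    (hlam : ∀ l k, 0 < lam l k) (hσ2 : 0 < σ2) (hξ : 1 ≤ ξ) (hκ : 0 ≤ κ) (hδ : 0 ≤ δ)
    (t : ℕ) (ht : B ≤ t) :
    ∀ l : Fin L, ∀ k : Fin K,
      ((Matrix.of fun (n₁ : Fin N) (q : Fin B × Fin N) =>
          ∫ ω, M.hEff l k t n₁ ω * star (M.y q.2 q.1 ω))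
        = Matrix.of fun (n₁ : Fin N) (q : Fin B × Fin N) =>
            ((lam l k : ℝ) : ℂ) * Matrix.vecMul (star (x l k)) (Dmat δ t B) q.1
              * (1 : Matrix (Fin N) (Fin N) ℂ) n₁ q.2) ∧
      ∀ b : Fin B,
        (Matrix.of fun n₁ n₂ : Fin N => ∫ ω, M.hEff l k t n₁ ω * star (M.y n₂ b ω))
          = (((lam l k : ℝ) : ℂ) * star (x l k b)
              * ((Real.exp (-(δ / 2) * ((t : ℝ) - ((b : ℕ) + 1))) : ℝ) : ℂ))
            • (1 : Matrix (Fin N) (Fin N) ℂ) := by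
  intro l k
  refine ⟨?_, fun b => ?_⟩
  · ext n₁ q
    rw [Matrix.of_apply, Matrix.of_apply, M.entry hlam hδ t ht, Dmat, Matrix.vecMul_diagonal,
      Pi.star_apply]
    ring
  · ext n₁ n₂
    rw [Matrix.of_apply, M.entry hlam hδ t ht, Matrix.smul_apply, smul_eq_mul]
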